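/- For every 0<α<1 there exists a constant C=C(α)>0 such that for every f∈C*^{1,α}(ℝ) and every weight Φ∈W⁰, the principal value limit defining T_Φ(f)(s) exists for every s∈ℝ and ‖T_Φ(f)‖₀* ≤ C·⦀Φ⦀₀·‖f‖_{1,α}*. -/

import Mathlib

open MeasureTheory Filter Topology Set
open scoped ENNReal

noncomputable section

/-- Weighted sup norm `‖f‖₀* = sup_s (1+|s|^{1+α})|f(s)|`. -/
def wSup (α : ℝ) (f : ℝ → ℝ) : ℝ≥0∞ :=
  ⨆ s : ℝ, ENNReal.ofReal ((1 + |s| ^ (1 + α)) * |f s|)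

/-- Weighted Hölder seminorm `[f]_α*`. -/
def wHolder (α : ℝ) (f : ℝ → ℝ) : ℝ≥0∞ :=
  ⨆ s : ℝ, ⨆ ξ : {ξ : ℝ // 0 < |ξ| ∧ |ξ| ≤ 1},
    ENNReal.ofReal ((1 + |s| ^ (1 + α)) * |f (s - ξ.1) - f s| / |ξ.1| ^ α)

/-- Weighted norm `‖f‖_{k,α}*`. -/
def wNorm (α : ℝ) (k : ℕ) (f : ℝ → ℝ) : ℝ≥0∞ :=
  (⨆ s : ℝ, ⨆ j : Fin (k + 1),
      ENNReal.ofReal ((1 + |s| ^ (1 + α)) * |iteratedDeriv j.1 f s|))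
    + wHolder α (iteratedDeriv k f)

/-- Membership in the weighted Hölder space `C*^{k,α}(ℝ)`. -/
def CStar (α : ℝ) (k : ℕ) (f : ℝ → ℝ) : Prop :=
  ContDiff ℝ k f ∧ wNorm α k f < ⊤

/-- Truncated singular integral defining `T_Φ(g)(s)`; the operator value is its
limit as `R → ∞`. -/
def TInt (Φ : ℝ → ℝ → ℝ) (g : ℝ → ℝ) (s R : ℝ) : ℝ :=
  (1 / (2 * Real.pi)) * ∫ ξ in (-R)..R, ((deriv g (s - ξ) - deriv g s) / ξ) * Φ ξ s

/-- `Φ̄ = ξ(Φ - Φ^∞)`. -/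
def barW (Φ : ℝ → ℝ → ℝ) (Φinf : ℝ → ℝ) (ξ s : ℝ) : ℝ := ξ * (Φ ξ s - Φinf s)

/-- `Φ̃ = ξ∂_ξΦ - Φ`. -/
def tildeW (Φ : ℝ → ℝ → ℝ) (ξ s : ℝ) : ℝ := ξ * deriv (fun ξ' => Φ ξ' s) ξ - Φ ξ s

/-- The weight norm `⦀Φ⦀₀` (relative to the far field `Φinf = Φ^∞`). -/
def WNorm0 (Φ : ℝ → ℝ → ℝ) (Φinf : ℝ → ℝ) : ℝ≥0∞ :=
  (⨆ s : ℝ, ⨆ ξ : {ξ : ℝ // 0 < |ξ| ∧ |ξ| ≤ 1}, ENNReal.ofReal |Φ ξ.1 s|)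
    + ⨆ s : ℝ, ⨆ ξ : {ξ : ℝ // 1 < |ξ|},
        ENNReal.ofReal (|barW Φ Φinf ξ.1 s| + |tildeW Φ ξ.1 s|)

/-- Membership `Φ ∈ W⁰`, with far field `Φinf`. -/
def MemW0 (Φ : ℝ → ℝ → ℝ) (Φinf : ℝ → ℝ) : Prop :=
  (∀ s, ContDiffOn ℝ 1 (fun ξ => Φ ξ s) {(0 : ℝ)}ᶜ) ∧
  (∀ s, Tendsto (fun ξ => Φ ξ s) (cocompact ℝ) (𝓝 (Φinf s))) ∧
  WNorm0 Φ Φinf < ⊤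

/-!
Adding the odd function `f'(s) Φ^∞(s) / ξ · 1_{|ξ| > 1}` leaves every symmetric integral unchanged
and makes the integrand of `T_Φ(f)(s)` absolutely integrable, so the principal value is an ordinary
integral. For `|ξ| ≤ 1` the Hölder bound leaves the integrable singularity `|ξ|^{α-1}`. For
`|ξ| > 1` the term with `f'(s)` carries `(Φ - Φ^∞) / ξ = O(ξ⁻²)`, while the term with `f'(s - ξ)` is
integrated by parts: `∂_ξ(Φ / ξ) = Φ̃ / ξ²` is again `O(ξ⁻²)`, and since `α ≤ 1` the convolution of
`ξ⁻²` with the decay of `f` inherits that decay, because the weight `w(s) = 1 + |s|^{1+α}` satisfies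
`w(x + y) ≤ 2^α (w(x) + w(y))`.
-/

/-- The weight `1 + |s|^{1+α}` of the norms `‖·‖₀*` and `‖·‖_{k,α}*`. -/
def decayWeight (α s : ℝ) : ℝ := 1 + |s| ^ (1 + α)

section DecayWeight

variable {α : ℝ}

lemma decayWeight_pos (α s : ℝ) : 0 < decayWeight α s := by
  unfold decayWeight; positivity

lemma inv_decayWeight_nonneg (α s : ℝ) : 0 ≤ (decayWeight α s)⁻¹ :=
  (inv_pos.2 (decayWeight_pos α s)).le

lemma one_le_decayWeight (α s : ℝ) : 1 ≤ decayWeight α s :=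
  le_add_of_nonneg_right (by positivity)

lemma inv_decayWeight_le_one (α s : ℝ) : (decayWeight α s)⁻¹ ≤ 1 :=
  inv_le_one_of_one_le₀ (one_le_decayWeight α s)

lemma continuous_decayWeight (hα : 0 ≤ α) : Continuous (decayWeight α) :=
  continuous_const.add (continuous_abs.rpow_const fun _ => Or.inr (by linarith))

lemma add_rpow_one_add_le (hα : 0 ≤ α) {a b : ℝ} (ha : 0 ≤ a) (hb : 0 ≤ b) :
    (a + b) ^ (1 + α) ≤ 2 ^ α * (a ^ (1 + α) + b ^ (1 + α)) := by
  lift a to NNReal using ha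
  lift b to NNReal using hb
  have h := NNReal.rpow_add_le_mul_rpow_add_rpow a b (p := 1 + α) (by linarith)
  rw [add_sub_cancel_left] at h
  exact_mod_cast h

lemma decayWeight_add_le (hα : 0 ≤ α) (x y : ℝ) :
    decayWeight α (x + y) ≤ 2 ^ α * (decayWeight α x + decayWeight α y) := by
  have hone : (1 : ℝ) ≤ 2 ^ α := Real.one_le_rpow one_le_two hα
  have hxy : |x + y| ^ (1 + α) ≤ 2 ^ α * (|x| ^ (1 + α) + |y| ^ (1 + α)) :=
    (Real.rpow_le_rpow (abs_nonneg _) (abs_add_le x y) (by linarith)).trans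
      (add_rpow_one_add_le hα (abs_nonneg x) (abs_nonneg y))
  unfold decayWeight
  linarith

lemma inv_decayWeight_sub_le (hα : 0 ≤ α) (s ξ : ℝ) :
    (decayWeight α (s - ξ))⁻¹ ≤ 2 ^ α * (1 + decayWeight α ξ) * (decayWeight α s)⁻¹ := by
  have hw := decayWeight_add_le hα (s - ξ) ξ
  rw [sub_add_cancel] at hw
  have hone := one_le_decayWeight α (s - ξ)
  have hξ := decayWeight_pos α ξ
  rw [← div_eq_mul_inv, inv_eq_one_div,
    div_le_div_iff₀ (decayWeight_pos α (s - ξ)) (decayWeight_pos α s), one_mul]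
  calc decayWeight α s
      ≤ 2 ^ α * (decayWeight α (s - ξ) + decayWeight α ξ) := hw
    _ ≤ 2 ^ α * (decayWeight α (s - ξ) + decayWeight α ξ * decayWeight α (s - ξ)) := by
        gcongr; exact le_mul_of_one_le_right hξ.le hone
    _ = 2 ^ α * (1 + decayWeight α ξ) * decayWeight α (s - ξ) := by ring

lemma inv_decayWeight_mul_le (hα : 0 ≤ α) (s ξ : ℝ) :
    (decayWeight α ξ)⁻¹ * (decayWeight α (s - ξ))⁻¹ ≤
      2 ^ α * (decayWeight α s)⁻¹ * ((decayWeight α ξ)⁻¹ + (decayWeight α (s - ξ))⁻¹) := by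
  have hw := decayWeight_add_le hα (s - ξ) ξ
  rw [sub_add_cancel] at hw
  have hs := decayWeight_pos α s
  have hξ := decayWeight_pos α ξ
  have hsξ := decayWeight_pos α (s - ξ)
  rw [show 2 ^ α * (decayWeight α s)⁻¹ * ((decayWeight α ξ)⁻¹ + (decayWeight α (s - ξ))⁻¹) =
      2 ^ α * (decayWeight α (s - ξ) + decayWeight α ξ) / decayWeight α s *
        ((decayWeight α ξ)⁻¹ * (decayWeight α (s - ξ))⁻¹) by field_simp]
  exact le_mul_of_one_le_left (by positivity) ((one_le_div hs).2 hw)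

lemma integrable_inv_decayWeight (hα : 0 < α) : Integrable fun x => (decayWeight α x)⁻¹ := by
  have hjapanese : Integrable fun x : ℝ => 2 ^ α * (1 + ‖x‖) ^ (-(1 + α)) :=
    (integrable_one_add_norm (by simpa using hα)).const_mul _
  refine hjapanese.mono' ((continuous_decayWeight hα.le).inv₀ fun x =>
    (decayWeight_pos α x).ne').aestronglyMeasurable (.of_forall fun x => ?_)
  have hx : (1 + |x|) ^ (1 + α) ≤ 2 ^ α * decayWeight α x := by
    simpa [decayWeight] using add_rpow_one_add_le hα.le zero_le_one (abs_nonneg x)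
  rw [Real.norm_of_nonneg (inv_decayWeight_nonneg α x), Real.norm_eq_abs,
    Real.rpow_neg (by positivity), ← div_eq_mul_inv, inv_eq_one_div,
    div_le_div_iff₀ (decayWeight_pos α x) (by positivity), one_mul]
  exact hx

lemma integrable_inv_decayWeight_sub (hα : 0 < α) (s : ℝ) :
    Integrable fun ξ => (decayWeight α (s - ξ))⁻¹ :=
  (integrable_inv_decayWeight hα).comp_sub_left s

lemma integrable_inv_decayWeight_mul (hα : 0 < α) (s : ℝ) :
    Integrable fun ξ => (decayWeight α ξ)⁻¹ * (decayWeight α (s - ξ))⁻¹ :=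
  (integrable_inv_decayWeight_sub hα s).bdd_mul (c := 1)
    (integrable_inv_decayWeight hα).aestronglyMeasurable (.of_forall fun ξ => by
      rw [Real.norm_of_nonneg (inv_decayWeight_nonneg α ξ)]
      exact inv_decayWeight_le_one α ξ)

lemma integral_inv_decayWeight_mul_le (hα : 0 < α) (s : ℝ) :
    ∫ ξ, (decayWeight α ξ)⁻¹ * (decayWeight α (s - ξ))⁻¹ ≤
      2 * 2 ^ α * (∫ x, (decayWeight α x)⁻¹) * (decayWeight α s)⁻¹ := by
  have hint := integrable_inv_decayWeight hα
  have hint_sub := integrable_inv_decayWeight_sub hα s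
  calc ∫ ξ, (decayWeight α ξ)⁻¹ * (decayWeight α (s - ξ))⁻¹
      ≤ ∫ ξ, 2 ^ α * (decayWeight α s)⁻¹ * ((decayWeight α ξ)⁻¹ + (decayWeight α (s - ξ))⁻¹) :=
        integral_mono (integrable_inv_decayWeight_mul hα s) ((hint.add hint_sub).const_mul _)
          (inv_decayWeight_mul_le hα.le s)
    _ = 2 * 2 ^ α * (∫ x, (decayWeight α x)⁻¹) * (decayWeight α s)⁻¹ := by
        rw [integral_const_mul, integral_add hint hint_sub,
          integral_sub_left_eq_self (fun x => (decayWeight α x)⁻¹) volume s]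
        ring

lemma inv_sq_le_inv_decayWeight (hα : α ≤ 1) {ξ : ℝ} (hξ : 1 ≤ |ξ|) :
    (ξ ^ 2)⁻¹ ≤ 2 * (decayWeight α ξ)⁻¹ := by
  have hpow : |ξ| ^ (1 + α) ≤ ξ ^ 2 := by
    rw [← sq_abs, ← Real.rpow_two]
    exact Real.rpow_le_rpow_of_exponent_le hξ (by linarith)
  have hsq : 1 ≤ ξ ^ 2 := (one_le_sq_iff_one_le_abs ξ).2 hξ
  rw [← div_eq_mul_inv, inv_eq_one_div, div_le_div_iff₀ (by positivity) (decayWeight_pos α ξ)]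
  unfold decayWeight
  linarith

end DecayWeight

section Integrals

lemma intervalIntegral_neg_self_eq_zero_of_odd {E : Type*} [NormedAddCommGroup E]
    [NormedSpace ℝ E] {h : ℝ → E} (hodd : Function.Odd h) (R : ℝ) : ∫ ξ in (-R)..R, h ξ = 0 := by
  have hneg : ∫ ξ in (-R)..R, h ξ = -∫ ξ in (-R)..R, h ξ := by
    rw [← intervalIntegral.integral_neg]
    simpa [hodd _] using (intervalIntegral.integral_comp_neg (a := -R) (b := R) h).symm
  have htwo : (2 : ℝ) • ∫ ξ in (-R)..R, h ξ = 0 := by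
    rw [two_smul, ← eq_neg_iff_add_eq_zero]
    exact hneg
  exact (smul_eq_zero.1 htwo).resolve_left two_ne_zero

lemma tendsto_intervalIntegral_neg_self_of_odd {E : Type*} [NormedAddCommGroup E]
    [NormedSpace ℝ E] {F h : ℝ → E} (hodd : Function.Odd h) (hloc : LocallyIntegrable h)
    (hint : Integrable (F + h)) :
    Tendsto (fun R => ∫ ξ in (-R)..R, F ξ) atTop (𝓝 (∫ ξ, (F + h) ξ)) := by
  refine (intervalIntegral_tendsto_integral hint tendsto_neg_atTop_atBot tendsto_id).congr
    fun R => ?_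
  have hh : IntervalIntegrable h volume (-R) R :=
    (hloc.integrableOn_isCompact isCompact_uIcc).intervalIntegrable
  calc ∫ ξ in (-R)..R, (F + h) ξ
      = (∫ ξ in (-R)..R, (F + h) ξ) - ∫ ξ in (-R)..R, h ξ := by
        rw [intervalIntegral_neg_self_eq_zero_of_odd hodd, sub_zero]
    _ = ∫ ξ in (-R)..R, F ξ := by
        rw [← intervalIntegral.integral_sub hint.intervalIntegrable hh]
        simp

lemma abs_setIntegral_le_integral_of_abs_le {X : Type*} [MeasurableSpace X] {μ : Measure X}
    {S : Set X} {F G : X → ℝ} (hS : MeasurableSet S) (hG : Integrable G μ) (hG0 : ∀ x, 0 ≤ G x)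
    (hFG : ∀ x ∈ S, |F x| ≤ G x) : |∫ x in S, F x ∂μ| ≤ ∫ x, G x ∂μ :=
  calc |∫ x in S, F x ∂μ|
      ≤ ∫ x in S, G x ∂μ :=
        norm_integral_le_of_norm_le (f := F) hG.integrableOn (ae_restrict_of_forall_mem hS hFG)
    _ ≤ ∫ x, G x ∂μ := setIntegral_le_integral hG (.of_forall hG0)

lemma integrableOn_abs_rpow_sub_one {α : ℝ} (hα : 0 < α) :
    IntegrableOn (fun ξ : ℝ => |ξ| ^ (α - 1)) (Icc (-1) 1) := by
  have hloc : LocallyIntegrable fun ξ : ℝ => |ξ| ^ (α - 1) := by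
    refine locallyIntegrable_of_norm_le_rpow (C := 1) (α := 1 - α) (by simp) (by simpa using hα)
      (.of_forall fun ξ => ?_) (measurable_abs.pow_const _).aestronglyMeasurable
    rw [Real.norm_of_nonneg (by positivity), one_mul, neg_sub, Real.norm_eq_abs]
  exact hloc.integrableOn_isCompact isCompact_Icc

lemma compl_Icc_eq_Iio_union_Ioi {X : Type*} [LinearOrder X] (a b : X) :
    (Icc a b)ᶜ = Iio a ∪ Ioi b := by
  ext x; simp [imp_iff_not_or]

lemma setIntegral_compl_Icc_eq_sub_of_hasDerivAt {E : Type*} [NormedAddCommGroup E]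
    [NormedSpace ℝ E] [CompleteSpace E] {W W' : ℝ → E} {a b : ℝ} (hab : a ≤ b)
    (hderiv : ∀ x ∈ (Ioo a b)ᶜ, HasDerivAt W (W' x) x)
    (hW : IntegrableOn W (Icc a b)ᶜ) (hW' : IntegrableOn W' (Icc a b)ᶜ) :
    ∫ x in (Icc a b)ᶜ, W' x = W a - W b := by
  have hright : ∀ x ∈ Ici b, HasDerivAt W (W' x) x := fun x hx =>
    hderiv x fun hx' => not_lt_of_ge hx hx'.2
  have hleft : ∀ x ∈ Iic a, HasDerivAt W (W' x) x := fun x hx =>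
    hderiv x fun hx' => not_lt_of_ge hx hx'.1
  rw [compl_Icc_eq_Iio_union_Ioi, integrableOn_union, ← integrableOn_Iic_iff_integrableOn_Iio]
    at hW hW'
  have htop : Tendsto W atTop (𝓝 0) := tendsto_zero_of_hasDerivAt_of_integrableOn_Ioi
    (fun x hx => hright x (mem_Ici_of_Ioi hx)) hW'.2 hW.2
  have hbot : Tendsto W atBot (𝓝 0) := tendsto_zero_of_hasDerivAt_of_integrableOn_Iic
    hleft hW'.1 hW.1
  have hdisj : Disjoint (Iio a) (Ioi b) :=
    Set.disjoint_left.2 fun x hxa hxb => lt_asymm (lt_of_lt_of_le hxa hab) hxb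
  rw [compl_Icc_eq_Iio_union_Ioi, setIntegral_union hdisj measurableSet_Ioi
      (hW'.1.mono_set Iio_subset_Iic_self) hW'.2, ← integral_Iic_eq_integral_Iio,
    integral_Iic_of_hasDerivAt_of_tendsto' hleft hW'.1 hbot,
    integral_Ioi_of_hasDerivAt_of_tendsto' hright hW'.2 htop]
  abel

lemma setIntegral_compl_Icc_mul_deriv_eq {A : Type*} [NormedRing A] [NormedAlgebra ℝ A]
    [CompleteSpace A] {u v u' v' : ℝ → A} {a b : ℝ} (hab : a ≤ b)
    (hu : ∀ x ∈ (Ioo a b)ᶜ, HasDerivAt u (u' x) x) (hv : ∀ x ∈ (Ioo a b)ᶜ, HasDerivAt v (v' x) x)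
    (huv' : IntegrableOn (fun x => u x * v' x) (Icc a b)ᶜ)
    (hu'v : IntegrableOn (fun x => u' x * v x) (Icc a b)ᶜ)
    (huv : IntegrableOn (fun x => u x * v x) (Icc a b)ᶜ) :
    ∫ x in (Icc a b)ᶜ, u x * v' x =
      u a * v a - u b * v b - ∫ x in (Icc a b)ᶜ, u' x * v x := by
  rw [eq_sub_iff_add_eq', ← integral_add hu'v huv']
  exact setIntegral_compl_Icc_eq_sub_of_hasDerivAt hab (fun x hx => (hu x hx).mul (hv x hx)) huv
    (hu'v.add huv')

end Integrals

/-- Pointwise form of `‖f‖_{1,α}* ≤ N`: decay of `f` and `f'`, and the weighted Hölder bound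
on `f'`. -/
structure WeightedHolderBound (α N : ℝ) (f : ℝ → ℝ) : Prop where
  differentiable : Differentiable ℝ f
  abs_le (x : ℝ) : |f x| ≤ N * (decayWeight α x)⁻¹
  abs_deriv_le (x : ℝ) : |deriv f x| ≤ N * (decayWeight α x)⁻¹
  abs_deriv_sub_le (x : ℝ) {ξ : ℝ} (hξ : 0 < |ξ|) (hξ' : |ξ| ≤ 1) :
    |deriv f (x - ξ) - deriv f x| ≤ N * (decayWeight α x)⁻¹ * |ξ| ^ α

/-- Pointwise form of `⦀Φ⦀₀ ≤ M` for a single slice `φ = Φ(·, s)` with far field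
`L = Φ^∞(s)`. -/
structure SliceBound (L M : ℝ) (φ : ℝ → ℝ) : Prop where
  differentiableOn : DifferentiableOn ℝ φ {0}ᶜ
  abs_le {ξ : ℝ} (hξ : 0 < |ξ|) (hξ' : |ξ| ≤ 1) : |φ ξ| ≤ M
  abs_mul_sub_le {ξ : ℝ} (hξ : 1 < |ξ|) : |ξ * (φ ξ - L)| ≤ M
  abs_mul_deriv_sub_le {ξ : ℝ} (hξ : 1 < |ξ|) : |ξ * deriv φ ξ - φ ξ| ≤ M

lemma mem_compl_Icc_neg_one_one {ξ : ℝ} : ξ ∈ (Icc (-1 : ℝ) 1)ᶜ ↔ 1 < |ξ| := by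
  rw [mem_compl_iff, mem_Icc, ← abs_le, not_le]

lemma WeightedHolderBound.nonneg {α N : ℝ} {f : ℝ → ℝ} (hf : WeightedHolderBound α N f) : 0 ≤ N :=
  nonneg_of_mul_nonneg_left ((abs_nonneg _).trans (hf.abs_le 0)) (inv_pos.2 (decayWeight_pos α 0))

namespace SliceBound

variable {L M : ℝ} {φ : ℝ → ℝ}

lemma nonneg (hφ : SliceBound L M φ) : 0 ≤ M :=
  (abs_nonneg _).trans (hφ.abs_le (ξ := 1) (by simp) (by simp))

lemma measurable (hφ : SliceBound L M φ) : Measurable φ :=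
  measurable_of_continuousOn_compl_singleton 0 hφ.differentiableOn.continuousOn

lemma hasDerivAt_div (hφ : SliceBound L M φ) {ξ : ℝ} (hξ : ξ ≠ 0) :
    HasDerivAt (fun x => φ x / x) ((ξ * deriv φ ξ - φ ξ) / ξ ^ 2) ξ := by
  have hderiv : HasDerivAt φ (deriv φ ξ) ξ :=
    (hφ.differentiableOn.differentiableAt (isOpen_compl_singleton.mem_nhds hξ)).hasDerivAt
  simpa [mul_comm] using hderiv.fun_div (hasDerivAt_id' ξ) hξ

lemma abs_div_le (hφ : SliceBound L M φ) {ξ : ℝ} (hξ : 1 < |ξ|) : |φ ξ / ξ| ≤ M + |L| := by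
  have hsub : |φ ξ - L| ≤ M := by
    refine (le_mul_of_one_le_left (abs_nonneg _) hξ.le).trans ?_
    simpa only [abs_mul] using hφ.abs_mul_sub_le hξ
  calc |φ ξ / ξ| = |φ ξ| / |ξ| := abs_div _ _
    _ ≤ |φ ξ| := div_le_self (abs_nonneg _) hξ.le
    _ = |(φ ξ - L) + L| := by rw [sub_add_cancel]
    _ ≤ M + |L| := (abs_add_le _ _).trans (by gcongr)

lemma abs_sub_div_le {α : ℝ} (hα : α ≤ 1) (hφ : SliceBound L M φ) {ξ : ℝ} (hξ : 1 < |ξ|) :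
    |(φ ξ - L) / ξ| ≤ 2 * M * (decayWeight α ξ)⁻¹ := by
  have hξ0 : ξ ≠ 0 := abs_pos.1 (one_pos.trans hξ)
  calc |(φ ξ - L) / ξ| = |ξ * (φ ξ - L)| * (ξ ^ 2)⁻¹ := by
        rw [← abs_of_nonneg (inv_nonneg.2 (sq_nonneg ξ)), ← abs_mul]
        congr 1
        field_simp
    _ ≤ M * (2 * (decayWeight α ξ)⁻¹) := mul_le_mul (hφ.abs_mul_sub_le hξ)
        (inv_sq_le_inv_decayWeight hα hξ.le) (by positivity) hφ.nonneg
    _ = 2 * M * (decayWeight α ξ)⁻¹ := by ring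

lemma abs_deriv_div_le {α : ℝ} (hα : α ≤ 1) (hφ : SliceBound L M φ) {ξ : ℝ} (hξ : 1 < |ξ|) :
    |(ξ * deriv φ ξ - φ ξ) / ξ ^ 2| ≤ 2 * M * (decayWeight α ξ)⁻¹ := by
  calc |(ξ * deriv φ ξ - φ ξ) / ξ ^ 2| = |ξ * deriv φ ξ - φ ξ| * (ξ ^ 2)⁻¹ := by
        rw [div_eq_mul_inv, abs_mul, abs_of_nonneg (inv_nonneg.2 (sq_nonneg ξ))]
    _ ≤ M * (2 * (decayWeight α ξ)⁻¹) := mul_le_mul (hφ.abs_mul_deriv_sub_le hξ)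
        (inv_sq_le_inv_decayWeight hα hξ.le) (by positivity) hφ.nonneg
    _ = 2 * M * (decayWeight α ξ)⁻¹ := by ring

lemma integrableOn_sub_div {α : ℝ} (hα : 0 < α) (hα' : α ≤ 1) (hφ : SliceBound L M φ) :
    IntegrableOn (fun ξ => (φ ξ - L) / ξ) (Icc (-1) 1)ᶜ := by
  refine ((integrable_inv_decayWeight hα).const_mul (2 * M)).integrableOn.mono'
    ((hφ.measurable.sub_const L).div measurable_id).aestronglyMeasurable
    (ae_restrict_of_forall_mem measurableSet_Icc.compl fun ξ hξ => ?_)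
  exact hφ.abs_sub_div_le hα' (mem_compl_Icc_neg_one_one.1 hξ)

lemma integrableOn_div_mul {α N : ℝ} (hα : 0 < α) (hφ : SliceBound L M φ) {g : ℝ → ℝ}
    (hg : Measurable g) (hgN : ∀ x, |g x| ≤ N * (decayWeight α x)⁻¹) (s : ℝ) :
    IntegrableOn (fun ξ => φ ξ / ξ * g (s - ξ)) (Icc (-1) 1)ᶜ := by
  have hmeas := hφ.measurable
  refine ((integrable_inv_decayWeight_sub hα s).const_mul ((M + |L|) * N)).integrableOn.mono'
    (by fun_prop) (ae_restrict_of_forall_mem measurableSet_Icc.compl fun ξ hξ => ?_)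
  rw [Real.norm_eq_abs, abs_mul, mul_assoc]
  exact mul_le_mul (hφ.abs_div_le (mem_compl_Icc_neg_one_one.1 hξ)) (hgN _) (abs_nonneg _)
    (add_nonneg hφ.nonneg (abs_nonneg L))

lemma abs_deriv_div_mul_le {α N : ℝ} (hα : α ≤ 1) (hφ : SliceBound L M φ) {g : ℝ → ℝ}
    (hgN : ∀ x, |g x| ≤ N * (decayWeight α x)⁻¹) (s : ℝ) {ξ : ℝ} (hξ : 1 < |ξ|) :
    |(ξ * deriv φ ξ - φ ξ) / ξ ^ 2 * g (s - ξ)| ≤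
      2 * M * N * ((decayWeight α ξ)⁻¹ * (decayWeight α (s - ξ))⁻¹) :=
  calc |(ξ * deriv φ ξ - φ ξ) / ξ ^ 2 * g (s - ξ)|
      ≤ 2 * M * (decayWeight α ξ)⁻¹ * (N * (decayWeight α (s - ξ))⁻¹) := by
        rw [abs_mul]
        exact mul_le_mul (hφ.abs_deriv_div_le hα hξ) (hgN _) (abs_nonneg _)
          ((abs_nonneg _).trans (hφ.abs_deriv_div_le hα hξ))
    _ = 2 * M * N * ((decayWeight α ξ)⁻¹ * (decayWeight α (s - ξ))⁻¹) := by ring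

lemma integrableOn_deriv_div_mul {α N : ℝ} (hα : 0 < α) (hα' : α ≤ 1) (hφ : SliceBound L M φ)
    {g : ℝ → ℝ} (hg : Measurable g) (hgN : ∀ x, |g x| ≤ N * (decayWeight α x)⁻¹) (s : ℝ) :
    IntegrableOn (fun ξ => (ξ * deriv φ ξ - φ ξ) / ξ ^ 2 * g (s - ξ)) (Icc (-1) 1)ᶜ := by
  have hmeas := hφ.measurable
  refine ((integrable_inv_decayWeight_mul hα s).const_mul (2 * M * N)).integrableOn.mono'
    (by fun_prop) (ae_restrict_of_forall_mem measurableSet_Icc.compl fun ξ hξ => ?_)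
  exact hφ.abs_deriv_div_mul_le hα' hgN s (mem_compl_Icc_neg_one_one.1 hξ)

lemma setIntegral_div_mul_deriv_eq {α N : ℝ} (hα : 0 < α) (hα' : α ≤ 1) (hφ : SliceBound L M φ)
    {f : ℝ → ℝ} (hf : WeightedHolderBound α N f) (s : ℝ) :
    ∫ ξ in (Icc (-1) 1)ᶜ, φ ξ / ξ * deriv f (s - ξ) =
      φ (-1) * f (s + 1) + φ 1 * f (s - 1) +
        ∫ ξ in (Icc (-1) 1)ᶜ, (ξ * deriv φ ξ - φ ξ) / ξ ^ 2 * f (s - ξ) := by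
  have hf_neg : ∀ x, |-f x| ≤ N * (decayWeight α x)⁻¹ := fun x => by
    rw [abs_neg]
    exact hf.abs_le x
  have hmeas : Measurable fun x => -f x := hf.differentiable.continuous.measurable.neg
  have hprimitive : ∀ ξ, HasDerivAt (fun x => -f (s - x)) (deriv f (s - ξ)) ξ := fun ξ => by
    simpa using ((hf.differentiable (s - ξ)).hasDerivAt.comp_const_sub s ξ).fun_neg
  have hne : ∀ ξ ∈ (Ioo (-1 : ℝ) 1)ᶜ, ξ ≠ 0 := by
    rintro ξ hξ rfl
    exact hξ (by simp)
  rw [setIntegral_compl_Icc_mul_deriv_eq (by norm_num)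
    (fun ξ hξ => hφ.hasDerivAt_div (hne ξ hξ)) (fun ξ _ => hprimitive ξ)
    (hφ.integrableOn_div_mul hα (measurable_deriv f) hf.abs_deriv_le s)
    (hφ.integrableOn_deriv_div_mul hα hα' hmeas hf_neg s)
    (hφ.integrableOn_div_mul hα hmeas hf_neg s)]
  simp only [mul_neg, integral_neg, sub_neg_eq_add]
  ring

lemma abs_setIntegral_sub_div_le {α : ℝ} (hα : 0 < α) (hα' : α ≤ 1) (hφ : SliceBound L M φ) :
    |∫ ξ in (Icc (-1) 1)ᶜ, (φ ξ - L) / ξ| ≤ 2 * M * ∫ x, (decayWeight α x)⁻¹ := by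
  rw [← integral_const_mul]
  exact abs_setIntegral_le_integral_of_abs_le measurableSet_Icc.compl
    ((integrable_inv_decayWeight hα).const_mul _)
    (fun x => mul_nonneg (mul_nonneg zero_le_two hφ.nonneg) (inv_decayWeight_nonneg α x))
    fun ξ hξ => hφ.abs_sub_div_le hα' (mem_compl_Icc_neg_one_one.1 hξ)

lemma abs_setIntegral_deriv_div_mul_le {α N : ℝ} (hα : 0 < α) (hα' : α ≤ 1)
    (hφ : SliceBound L M φ) (hN : 0 ≤ N) {g : ℝ → ℝ}
    (hgN : ∀ x, |g x| ≤ N * (decayWeight α x)⁻¹) (s : ℝ) :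
    |∫ ξ in (Icc (-1) 1)ᶜ, (ξ * deriv φ ξ - φ ξ) / ξ ^ 2 * g (s - ξ)| ≤
      4 * 2 ^ α * (∫ x, (decayWeight α x)⁻¹) * (M * N * (decayWeight α s)⁻¹) := by
  have hMN : 0 ≤ 2 * M * N := mul_nonneg (mul_nonneg zero_le_two hφ.nonneg) hN
  calc |∫ ξ in (Icc (-1) 1)ᶜ, (ξ * deriv φ ξ - φ ξ) / ξ ^ 2 * g (s - ξ)|
      ≤ ∫ ξ, 2 * M * N * ((decayWeight α ξ)⁻¹ * (decayWeight α (s - ξ))⁻¹) :=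
        abs_setIntegral_le_integral_of_abs_le measurableSet_Icc.compl
          ((integrable_inv_decayWeight_mul hα s).const_mul _)
          (fun ξ => mul_nonneg hMN
            (mul_nonneg (inv_decayWeight_nonneg α ξ) (inv_decayWeight_nonneg α (s - ξ))))
          fun ξ hξ => hφ.abs_deriv_div_mul_le hα' hgN s (mem_compl_Icc_neg_one_one.1 hξ)
    _ ≤ 2 * M * N * (2 * 2 ^ α * (∫ x, (decayWeight α x)⁻¹) * (decayWeight α s)⁻¹) := by
        rw [integral_const_mul]
        gcongr
        exact integral_inv_decayWeight_mul_le hα s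
    _ = 4 * 2 ^ α * (∫ x, (decayWeight α x)⁻¹) * (M * N * (decayWeight α s)⁻¹) := by ring

end SliceBound

lemma WeightedHolderBound.abs_sub_le_of_abs_eq_one {α N : ℝ} (hα : 0 ≤ α) {f : ℝ → ℝ}
    (hf : WeightedHolderBound α N f) (s : ℝ) {ξ : ℝ} (hξ : |ξ| = 1) :
    |f (s - ξ)| ≤ 3 * 2 ^ α * (N * (decayWeight α s)⁻¹) :=
  calc |f (s - ξ)| ≤ N * (decayWeight α (s - ξ))⁻¹ := hf.abs_le _
    _ ≤ N * (2 ^ α * (1 + decayWeight α ξ) * (decayWeight α s)⁻¹) :=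
        mul_le_mul_of_nonneg_left (inv_decayWeight_sub_le hα s ξ) hf.nonneg
    _ = 3 * 2 ^ α * (N * (decayWeight α s)⁻¹) := by
        rw [decayWeight, hξ, Real.one_rpow]
        ring

/-- The singular integrand `(f'(s - ξ) - f'(s)) / ξ · φ(ξ)` of `T_Φ(f)(s)`, for the slice
`φ = Φ(·, s)`. -/
def singularIntegrand (f φ : ℝ → ℝ) (s ξ : ℝ) : ℝ := (deriv f (s - ξ) - deriv f s) / ξ * φ ξ

/-- The odd function equal to `1 / ξ` for `|ξ| > 1` and to `0` otherwise. -/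
def truncInv : ℝ → ℝ := (Icc (-1) 1)ᶜ.indicator fun ξ => ξ⁻¹

lemma truncInv_of_one_lt_abs {ξ : ℝ} (hξ : 1 < |ξ|) : truncInv ξ = ξ⁻¹ :=
  indicator_of_mem (mem_compl_Icc_neg_one_one.2 hξ) _

lemma truncInv_of_abs_le_one {ξ : ℝ} (hξ : |ξ| ≤ 1) : truncInv ξ = 0 :=
  indicator_of_notMem (not_not.2 (abs_le.1 hξ)) _

lemma odd_truncInv : Function.Odd truncInv := by
  intro ξ
  rcases le_or_gt |ξ| 1 with hξ | hξ
  · rw [truncInv_of_abs_le_one hξ, truncInv_of_abs_le_one (by rwa [abs_neg]), neg_zero]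
  · rw [truncInv_of_one_lt_abs hξ, truncInv_of_one_lt_abs (by rwa [abs_neg]), inv_neg]

lemma locallyIntegrable_truncInv : LocallyIntegrable truncInv := by
  refine (locallyIntegrable_const (1 : ℝ)).mono
    (measurable_inv.indicator measurableSet_Icc.compl).aestronglyMeasurable (.of_forall fun ξ => ?_)
  rcases le_or_gt |ξ| 1 with hξ | hξ
  · simp [truncInv_of_abs_le_one hξ]
  · rw [truncInv_of_one_lt_abs hξ, norm_inv, norm_one]
    exact inv_le_one_of_one_le₀ hξ.le

section SingularIntegrand

variable {α L M N : ℝ} {f φ : ℝ → ℝ}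

lemma measurable_singularIntegrand (hφ : Measurable φ) (s : ℝ) :
    Measurable (singularIntegrand f φ s) :=
  ((((measurable_deriv f).comp (measurable_const.sub measurable_id)).sub_const _).div
    measurable_id).mul hφ

lemma abs_singularIntegrand_le (hf : WeightedHolderBound α N f) (hφ : SliceBound L M φ)
    (s : ℝ) {ξ : ℝ} (hξ : |ξ| ≤ 1) :
    |singularIntegrand f φ s ξ| ≤ M * N * (decayWeight α s)⁻¹ * |ξ| ^ (α - 1) := by
  have hMN : 0 ≤ M * N * (decayWeight α s)⁻¹ :=
    mul_nonneg (mul_nonneg hφ.nonneg hf.nonneg) (inv_decayWeight_nonneg α s)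
  rcases eq_or_ne ξ 0 with rfl | hξ0
  · simpa [singularIntegrand] using mul_nonneg hMN (Real.rpow_nonneg le_rfl (α - 1))
  have hpos : 0 < |ξ| := abs_pos.2 hξ0
  calc |singularIntegrand f φ s ξ|
      = |deriv f (s - ξ) - deriv f s| / |ξ| * |φ ξ| := by
        rw [singularIntegrand, abs_mul, abs_div]
    _ ≤ N * (decayWeight α s)⁻¹ * |ξ| ^ α / |ξ| * M := by
        have hbound_nonneg := (abs_nonneg _).trans (hf.abs_deriv_sub_le s hpos hξ)
        gcongr
        · exact hf.abs_deriv_sub_le s hpos hξ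
        · exact hφ.abs_le hpos hξ
    _ = M * N * (decayWeight α s)⁻¹ * |ξ| ^ (α - 1) := by
        rw [Real.rpow_sub_one hpos.ne']
        ring

lemma integrableOn_singularIntegrand_Icc (hα : 0 < α) (hf : WeightedHolderBound α N f)
    (hφ : SliceBound L M φ) (s : ℝ) : IntegrableOn (singularIntegrand f φ s) (Icc (-1) 1) :=
  ((integrableOn_abs_rpow_sub_one hα).const_mul (M * N * (decayWeight α s)⁻¹)).mono'
    (measurable_singularIntegrand hφ.measurable s).aestronglyMeasurable
    (ae_restrict_of_forall_mem measurableSet_Icc fun _ hξ =>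
      abs_singularIntegrand_le hf hφ s (abs_le.2 hξ))

lemma abs_setIntegral_singularIntegrand_Icc_le (hα : 0 < α) (hf : WeightedHolderBound α N f)
    (hφ : SliceBound L M φ) (s : ℝ) :
    |∫ ξ in Icc (-1) 1, singularIntegrand f φ s ξ| ≤
      (∫ ξ in Icc (-1) 1, |ξ| ^ (α - 1)) * (M * N * (decayWeight α s)⁻¹) := by
  rw [mul_comm, ← integral_const_mul]
  exact norm_integral_le_of_norm_le (f := singularIntegrand f φ s)
    ((integrableOn_abs_rpow_sub_one hα).const_mul _)
    (ae_restrict_of_forall_mem measurableSet_Icc fun _ hξ =>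
      abs_singularIntegrand_le hf hφ s (abs_le.2 hξ))

/-- The singular integrand plus the odd function `f'(s) L / ξ · 1_{|ξ| > 1}`. The correction does
not change symmetric integrals and makes the integrand absolutely integrable. -/
def regularizedIntegrand (L : ℝ) (f φ : ℝ → ℝ) (s : ℝ) : ℝ → ℝ :=
  singularIntegrand f φ s + fun ξ => deriv f s * L * truncInv ξ

lemma regularizedIntegrand_eqOn_Icc (L : ℝ) (f φ : ℝ → ℝ) (s : ℝ) :
    EqOn (regularizedIntegrand L f φ s) (singularIntegrand f φ s) (Icc (-1) 1) := fun ξ hξ => by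
  simp [regularizedIntegrand, truncInv_of_abs_le_one (abs_le.2 hξ)]

lemma regularizedIntegrand_eqOn_compl_Icc (L : ℝ) (f φ : ℝ → ℝ) (s : ℝ) :
    EqOn (regularizedIntegrand L f φ s)
      (fun ξ => φ ξ / ξ * deriv f (s - ξ) - deriv f s * ((φ ξ - L) / ξ)) (Icc (-1) 1)ᶜ :=
  fun ξ hξ => by
    simp only [regularizedIntegrand, Pi.add_apply, singularIntegrand,
      truncInv_of_one_lt_abs (mem_compl_Icc_neg_one_one.1 hξ)]
    ring

lemma integrable_regularizedIntegrand (hα : 0 < α) (hα' : α ≤ 1)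
    (hf : WeightedHolderBound α N f) (hφ : SliceBound L M φ) (s : ℝ) :
    Integrable (regularizedIntegrand L f φ s) := by
  rw [← integrableOn_univ, ← union_compl_self (Icc (-1 : ℝ) 1), integrableOn_union]
  constructor
  · exact (integrableOn_singularIntegrand_Icc hα hf hφ s).congr_fun
      (regularizedIntegrand_eqOn_Icc L f φ s).symm measurableSet_Icc
  · exact ((hφ.integrableOn_div_mul hα (measurable_deriv f) hf.abs_deriv_le s).sub
      ((hφ.integrableOn_sub_div hα hα').const_mul _)).congr_fun
      (regularizedIntegrand_eqOn_compl_Icc L f φ s).symm measurableSet_Icc.compl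

lemma tendsto_intervalIntegral_singularIntegrand (hα : 0 < α) (hα' : α ≤ 1)
    (hf : WeightedHolderBound α N f) (hφ : SliceBound L M φ) (s : ℝ) :
    Tendsto (fun R => ∫ ξ in (-R)..R, singularIntegrand f φ s ξ) atTop
      (𝓝 (∫ ξ, regularizedIntegrand L f φ s ξ)) :=
  tendsto_intervalIntegral_neg_self_of_odd (fun ξ => by simp only [odd_truncInv ξ, mul_neg])
    (locallyIntegrable_truncInv.smul (deriv f s * L))
    (integrable_regularizedIntegrand hα hα' hf hφ s)

lemma integral_regularizedIntegrand_eq (hα : 0 < α) (hα' : α ≤ 1)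
    (hf : WeightedHolderBound α N f) (hφ : SliceBound L M φ) (s : ℝ) :
    ∫ ξ, regularizedIntegrand L f φ s ξ =
      (∫ ξ in Icc (-1) 1, singularIntegrand f φ s ξ) +
        (φ (-1) * f (s + 1) + φ 1 * f (s - 1)) +
        (∫ ξ in (Icc (-1) 1)ᶜ, (ξ * deriv φ ξ - φ ξ) / ξ ^ 2 * f (s - ξ)) -
        deriv f s * ∫ ξ in (Icc (-1) 1)ᶜ, (φ ξ - L) / ξ := by
  rw [← integral_add_compl measurableSet_Icc (integrable_regularizedIntegrand hα hα' hf hφ s),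
    setIntegral_congr_fun measurableSet_Icc (regularizedIntegrand_eqOn_Icc L f φ s),
    setIntegral_congr_fun measurableSet_Icc.compl (regularizedIntegrand_eqOn_compl_Icc L f φ s),
    integral_sub (hφ.integrableOn_div_mul hα (measurable_deriv f) hf.abs_deriv_le s)
      ((hφ.integrableOn_sub_div hα hα').const_mul _),
    integral_const_mul, hφ.setIntegral_div_mul_deriv_eq hα hα' hf s]
  ring

lemma abs_boundary_terms_le (hα : 0 ≤ α) (hf : WeightedHolderBound α N f) (hφ : SliceBound L M φ)
    (s : ℝ) :
    |φ (-1) * f (s + 1) + φ 1 * f (s - 1)| ≤ 6 * 2 ^ α * (M * N * (decayWeight α s)⁻¹) := by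
  have hside : ∀ ξ : ℝ, |ξ| = 1 →
      |φ ξ * f (s - ξ)| ≤ M * (3 * 2 ^ α * (N * (decayWeight α s)⁻¹)) := fun ξ hξ => by
    rw [abs_mul]
    exact mul_le_mul (hφ.abs_le (by simp [hξ]) hξ.le) (hf.abs_sub_le_of_abs_eq_one hα s hξ)
      (abs_nonneg _) hφ.nonneg
  have hleft := hside (-1) (by simp)
  have hright := hside 1 (by simp)
  rw [sub_neg_eq_add] at hleft
  linarith [abs_add_le (φ (-1) * f (s + 1)) (φ 1 * f (s - 1))]

/-- The constant of the basic estimate, up to the factor `1 / (2π)`: the contributions of `|ξ| ≤ 1`,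
of the boundary terms of the integration by parts, and of the two absolutely convergent integrals
over `|ξ| > 1`. -/
def basicEstimateConst (α : ℝ) : ℝ :=
  (∫ ξ in Icc (-1) 1, |ξ| ^ (α - 1)) + 6 * 2 ^ α + (4 * 2 ^ α + 2) * ∫ x, (decayWeight α x)⁻¹

lemma basicEstimateConst_pos (α : ℝ) : 0 < basicEstimateConst α := by
  have hnear : 0 ≤ ∫ ξ in Icc (-1 : ℝ) 1, |ξ| ^ (α - 1) :=
    integral_nonneg fun ξ => Real.rpow_nonneg (abs_nonneg ξ) _
  have hfar : 0 ≤ ∫ x, (decayWeight α x)⁻¹ := integral_nonneg (inv_decayWeight_nonneg α)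
  exact add_pos_of_pos_of_nonneg (add_pos_of_nonneg_of_pos hnear (by positivity))
    (mul_nonneg (by positivity) hfar)

lemma abs_integral_regularizedIntegrand_le (hα : 0 < α) (hα' : α ≤ 1)
    (hf : WeightedHolderBound α N f) (hφ : SliceBound L M φ) (s : ℝ) :
    |∫ ξ, regularizedIntegrand L f φ s ξ| ≤
      basicEstimateConst α * (M * N * (decayWeight α s)⁻¹) := by
  have hnear := abs_setIntegral_singularIntegrand_Icc_le hα hf hφ s
  have hboundary := abs_boundary_terms_le hα.le hf hφ s
  have hparts := hφ.abs_setIntegral_deriv_div_mul_le hα hα' hf.nonneg hf.abs_le s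
  have htail : |deriv f s * ∫ ξ in (Icc (-1) 1)ᶜ, (φ ξ - L) / ξ| ≤
      N * (decayWeight α s)⁻¹ * (2 * M * ∫ x, (decayWeight α x)⁻¹) := by
    rw [abs_mul]
    exact mul_le_mul (hf.abs_deriv_le s) (hφ.abs_setIntegral_sub_div_le hα hα') (abs_nonneg _)
      ((abs_nonneg _).trans (hf.abs_deriv_le s))
  rw [integral_regularizedIntegrand_eq hα hα' hf hφ s, basicEstimateConst]
  refine ((abs_sub _ _).trans (add_le_add ((abs_add_le _ _).trans (add_le_add
    ((abs_add_le _ _).trans (add_le_add hnear hboundary)) hparts)) htail)).trans_eq ?_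
  ring

end SingularIntegrand

section Norms

variable {α : ℝ}

lemma abs_iteratedDeriv_le_of_wNorm_lt_top {k : ℕ} {f : ℝ → ℝ} (hf : wNorm α k f < ⊤) {j : ℕ}
    (hj : j ≤ k) (x : ℝ) :
    |iteratedDeriv j f x| ≤ (wNorm α k f).toReal * (decayWeight α x)⁻¹ := by
  rw [← div_eq_mul_inv, le_div_iff₀' (decayWeight_pos α x)]
  exact (ENNReal.ofReal_le_iff_le_toReal hf.ne).1 <| le_add_right <|
    le_iSup_of_le x (le_iSup_of_le ⟨j, Nat.lt_succ_of_le hj⟩ le_rfl)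

lemma abs_iteratedDeriv_sub_le_of_wNorm_lt_top {k : ℕ} {f : ℝ → ℝ} (hf : wNorm α k f < ⊤)
    (x : ℝ) {ξ : ℝ} (hξ : 0 < |ξ|) (hξ' : |ξ| ≤ 1) :
    |iteratedDeriv k f (x - ξ) - iteratedDeriv k f x| ≤
      (wNorm α k f).toReal * (decayWeight α x)⁻¹ * |ξ| ^ α := by
  rw [mul_right_comm, ← div_eq_mul_inv, le_div_iff₀' (decayWeight_pos α x),
    ← div_le_iff₀ (Real.rpow_pos_of_pos hξ α)]
  exact (ENNReal.ofReal_le_iff_le_toReal hf.ne).1 <| le_add_left <|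
    le_iSup_of_le x (le_iSup_of_le ⟨ξ, hξ, hξ'⟩ le_rfl)

lemma weightedHolderBound_of_cStar {f : ℝ → ℝ} (hf : CStar α 1 f) :
    WeightedHolderBound α (wNorm α 1 f).toReal f where
  differentiable := hf.1.differentiable (by simp)
  abs_le x := by simpa using abs_iteratedDeriv_le_of_wNorm_lt_top hf.2 zero_le_one x
  abs_deriv_le x := by simpa using abs_iteratedDeriv_le_of_wNorm_lt_top hf.2 le_rfl x
  abs_deriv_sub_le x ξ hξ hξ' := by
    simpa using abs_iteratedDeriv_sub_le_of_wNorm_lt_top hf.2 x hξ hξ'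

lemma sliceBound_of_wNorm0_lt_top {Φ : ℝ → ℝ → ℝ} {Φinf : ℝ → ℝ} (hfin : WNorm0 Φ Φinf < ⊤)
    {s : ℝ} (hdiff : DifferentiableOn ℝ (fun ξ => Φ ξ s) {0}ᶜ) :
    SliceBound (Φinf s) (WNorm0 Φ Φinf).toReal fun ξ => Φ ξ s := by
  have hfar : ∀ ξ : ℝ, 1 < |ξ| →
      |barW Φ Φinf ξ s| + |tildeW Φ ξ s| ≤ (WNorm0 Φ Φinf).toReal := fun ξ hξ =>
    (ENNReal.ofReal_le_iff_le_toReal hfin.ne).1 <| le_add_left <|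
      le_iSup_of_le s (le_iSup_of_le ⟨ξ, hξ⟩ le_rfl)
  exact
    { differentiableOn := hdiff
      abs_le := fun {ξ} hξ hξ' => (ENNReal.ofReal_le_iff_le_toReal hfin.ne).1 <| le_add_right <|
        le_iSup_of_le s (le_iSup_of_le ⟨ξ, hξ, hξ'⟩ le_rfl)
      abs_mul_sub_le := fun {ξ} hξ => (le_add_of_nonneg_right (abs_nonneg _)).trans (hfar ξ hξ)
      abs_mul_deriv_sub_le := fun {ξ} hξ =>
        (le_add_of_nonneg_left (abs_nonneg _)).trans (hfar ξ hξ) }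

lemma wSup_le_ofReal {g : ℝ → ℝ} {B : ℝ} (hg : ∀ s, |g s| ≤ B * (decayWeight α s)⁻¹) :
    wSup α g ≤ ENNReal.ofReal B :=
  iSup_le fun s => ENNReal.ofReal_le_ofReal <|
    (le_div_iff₀' (decayWeight_pos α s)).1 ((hg s).trans_eq (div_eq_mul_inv _ _).symm)

end Norms

theorem TPhi_basic_estimate_general {α : ℝ} (hα : 0 < α) (hα' : α ≤ 1) :
    ∃ C : ℝ, 0 < C ∧
      ∀ (f : ℝ → ℝ) (Φ : ℝ → ℝ → ℝ) (Φinf : ℝ → ℝ),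
        CStar α 1 f →
        (∀ s, DifferentiableOn ℝ (fun ξ => Φ ξ s) {0}ᶜ) →
        (∀ s, Tendsto (fun ξ => Φ ξ s) (cocompact ℝ) (𝓝 (Φinf s))) →
        WNorm0 Φ Φinf < ⊤ →
        ∃ Tf : ℝ → ℝ,
          (∀ s, Tendsto (fun R => TInt Φ f s R) atTop (𝓝 (Tf s))) ∧
          wSup α Tf ≤ ENNReal.ofReal C * WNorm0 Φ Φinf * wNorm α 1 f := by
  have hpi : 0 < 1 / (2 * Real.pi) := by positivity
  have hC : 0 < 1 / (2 * Real.pi) * basicEstimateConst α :=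
    mul_pos hpi (basicEstimateConst_pos α)
  refine ⟨1 / (2 * Real.pi) * basicEstimateConst α, hC, fun f Φ Φinf hf hdiff _ hfin => ?_⟩
  have hf_bound := weightedHolderBound_of_cStar hf
  have hΦ_bound := fun s => sliceBound_of_wNorm0_lt_top hfin (hdiff s)
  refine ⟨fun s => 1 / (2 * Real.pi) * ∫ ξ, regularizedIntegrand (Φinf s) f (fun ξ => Φ ξ s) s ξ,
    fun s => .const_mul _
      (tendsto_intervalIntegral_singularIntegrand hα hα' hf_bound (hΦ_bound s) s), ?_⟩
  rw [← ENNReal.ofReal_toReal hfin.ne, ← ENNReal.ofReal_toReal hf.2.ne,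
    ← ENNReal.ofReal_mul hC.le, ← ENNReal.ofReal_mul (mul_nonneg hC.le ENNReal.toReal_nonneg)]
  refine wSup_le_ofReal fun s => ?_
  rw [abs_mul, abs_of_pos hpi]
  refine (mul_le_mul_of_nonneg_left
    (abs_integral_regularizedIntegrand_le hα hα' hf_bound (hΦ_bound s) s) hpi.le).trans_eq ?_
  ring

/-- the basic weighted estimate `‖T_Φ f‖₀* ≤ C ⦀Φ⦀₀ ‖f‖_{1,α}*`. -/
theorem TPhi_basic_estimate :
    ∀ α : ℝ, 0 < α → α < 1 →
    ∃ C : ℝ, 0 < C ∧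
      ∀ (f : ℝ → ℝ) (Φ : ℝ → ℝ → ℝ) (Φinf : ℝ → ℝ),
        CStar α 1 f → MemW0 Φ Φinf →
        ∃ Tf : ℝ → ℝ,
          (∀ s, Tendsto (fun R => TInt Φ f s R) atTop (𝓝 (Tf s))) ∧
          wSup α Tf ≤ ENNReal.ofReal C * WNorm0 Φ Φinf * wNorm α 1 f := by
  intro α hα hα'
  obtain ⟨C, hC, h⟩ := TPhi_basic_estimate_general hα hα'.le
  exact ⟨C, hC, fun f Φ Φinf hf hΦ =>
    h f Φ Φinf hf (fun s => (hΦ.1 s).differentiableOn one_ne_zero) hΦ.2.1 hΦ.2.2⟩
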